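/- Fix r > 1 and let A : [1,∞) → ℂ be continuously differentiable with ∫_1^∞ |A(x)|² dx < ∞ and ∫_1^∞ |A'(x)| dx < ∞. Then the function K(s) = ∫_{max(s^{1/r},1)}^∞ A(x)·e^{ix}·x^{-r} dx (well defined as a Lebesgue integral, since A ∈ L² and x^{-r} ∈ L² on [1,∞)) is absolutely integrable on [1,∞): ∫_1^∞ |K(s)| ds < ∞. -/

import Mathlib

open MeasureTheory Filter Topology Complex

/-!
Write `G x = x ^ (-r) • A x` and `a = s ^ (1 / r)`. The absolute value of the integrand is too large
to be integrated in `s`, so the oscillation is used first: one integration by parts turns `K s` into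
`i (e ^ (i a) G(a) + ∫_a^∞ e ^ (i x) G'(x) dx)`. Substituting `s = x ^ r` bounds the boundary term
by a multiple of `∫ |A x| / x dx`, which is finite since `A` and `1 / x` are square-integrable. By
Fubini, the tails contribute at most `∫ x ^ r |G'(x)| dx`, and `x ^ r G'(x) = A'(x) - r A(x) / x`.
-/

section

variable {E : Type*} [NormedAddCommGroup E] [NormedSpace ℝ E]

lemma integrableOn_setIntegral_lt {α : Type*} [MeasurableSpace α] {μ : Measure α} [SFinite μ]
    {f : α → ℝ} {g : α → E} (hf : Measurable f) (hg : AEStronglyMeasurable g μ)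
    (hfg : Integrable (fun x => f x • g x) μ) :
    IntegrableOn (fun s : ℝ => ∫ x in {x | s < f x}, g x ∂μ) (Set.Ioi 0) := by
  set ν : Measure ℝ := volume.restrict (Set.Ioi 0)
  set F : ℝ × α → E := {p | p.1 < f p.2}.indicator fun p => g p.2
  have hFm : AEStronglyMeasurable F (ν.prod μ) :=
    hg.comp_snd.indicator (measurableSet_lt measurable_fst (hf.comp measurable_snd))
  have hν (x : α) : ν (Set.Iio (f x)) = ENNReal.ofReal (f x) := by
    rw [Measure.restrict_apply measurableSet_Iio, Set.Iio_inter_Ioi, Real.volume_Ioo, sub_zero]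
  have hFint : Integrable F (ν.prod μ) := by
    refine (integrable_prod_iff' hFm).2 ⟨.of_forall fun x => ?_, ?_⟩
    · change Integrable ((Set.Iio (f x)).indicator fun _ => g x) ν
      exact (integrable_indicator_iff measurableSet_Iio).2
        (integrableOn_const (hν x ▸ ENNReal.ofReal_ne_top))
    · refine hfg.mono hFm.norm.prod_swap.integral_prod_right' (.of_forall fun x => ?_)
      have hslice : ∫ s, ‖F (s, x)‖ ∂ν = max (f x) 0 * ‖g x‖ := by
        change ∫ s, ‖(Set.Iio (f x)).indicator (fun _ => g x) s‖ ∂ν = _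
        simp only [norm_indicator_eq_indicator_norm]
        rw [integral_indicator_const _ measurableSet_Iio, Measure.real, hν, ENNReal.toReal_ofReal',
          smul_eq_mul]
      rw [hslice, norm_mul, norm_norm, norm_smul]
      gcongr
      exact abs_max_le_max_abs_abs.trans (by simp)
  refine hFint.integral_prod_left.congr (.of_forall fun s => ?_)
  exact integral_indicator (measurableSet_lt measurable_const hf)

lemma rpow_smul_rpow_smul {x : ℝ} (hx : 0 < x) (p q : ℝ) (v : E) :
    x ^ p • x ^ q • v = x ^ (p + q) • v := by
  rw [smul_smul, Real.rpow_add hx]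

lemma integrableOn_rpow_smul_mono {p q b : ℝ} (hpq : p ≤ q) (hb : 0 < b) {f : ℝ → E}
    (hf : IntegrableOn (fun x => x ^ q • f x) (Set.Ioi b)) :
    IntegrableOn (fun x => x ^ p • f x) (Set.Ioi b) := by
  have hbdd : ∀ᵐ x ∂volume.restrict (Set.Ioi b), ‖x ^ (p - q)‖ ≤ b ^ (p - q) := by
    filter_upwards [ae_restrict_mem measurableSet_Ioi] with x hx
    rw [Real.norm_of_nonneg (Real.rpow_nonneg (hb.trans hx).le _)]
    exact Real.rpow_le_rpow_of_nonpos hb (le_of_lt hx) (sub_nonpos.2 hpq)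
  refine IntegrableOn.congr_fun
    (hf.bdd_smul _ (measurable_id.pow_const _).aestronglyMeasurable hbdd) (fun x hx => ?_)
    measurableSet_Ioi
  simp only [Pi.smul_apply', id_eq, rpow_smul_rpow_smul (hb.trans hx), sub_add_cancel]

lemma integrableOn_rpow_smul_of_integrableOn_sq {p b : ℝ} (hp : p < -1 / 2) (hb : 0 < b)
    {f : ℝ → E} (hfm : AEStronglyMeasurable f (volume.restrict (Set.Ioi b)))
    (hf : IntegrableOn (fun x => ‖f x‖ ^ 2) (Set.Ioi b)) :
    IntegrableOn (fun x => x ^ p • f x) (Set.Ioi b) := by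
  have hpow : IntegrableOn (fun x : ℝ => x ^ (p * (2 : ℕ))) (Set.Ioi b) :=
    integrableOn_Ioi_rpow_of_lt (by push_cast; linarith) hb
  refine Integrable.mono' (hpow.add hf)
    ((measurable_id.pow_const p).aestronglyMeasurable.smul hfm) ?_
  filter_upwards [ae_restrict_mem measurableSet_Ioi] with x hx
  have hx₀ : 0 < x := hb.trans hx
  rw [norm_smul, Real.norm_of_nonneg (Real.rpow_nonneg hx₀.le _), Pi.add_apply,
    Real.rpow_mul_natCast hx₀.le p 2]
  have hnonneg : 0 ≤ x ^ p * ‖f x‖ := mul_nonneg (Real.rpow_nonneg hx₀.le p) (norm_nonneg _)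
  linarith [two_mul_le_add_sq (x ^ p) ‖f x‖]

lemma lt_rpow_one_div {r a s : ℝ} (hr : 0 < r) (ha : 0 ≤ a) (hs : a ^ r < s) :
    a < s ^ (1 / r) := by
  have hs₀ : 0 ≤ s := (Real.rpow_nonneg ha r).trans hs.le
  rwa [one_div, Real.lt_rpow_inv_iff_of_pos ha hs₀ hr]

lemma setOf_lt_rpow_inter_Ioi {r a s : ℝ} (hr : 0 < r) (ha : 0 ≤ a) (hs : a ^ r < s) :
    {x | s < x ^ r} ∩ Set.Ioi a = Set.Ioi (s ^ (1 / r)) := by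
  have hs₀ : 0 ≤ s := (Real.rpow_nonneg ha r).trans hs.le
  have hiff {x : ℝ} (hx : a < x) : s ^ (1 / r) < x ↔ s < x ^ r := by
    rw [one_div, Real.rpow_inv_lt_iff_of_pos hs₀ (ha.trans hx.le) hr]
  ext x
  refine ⟨fun hx => (hiff hx.2).2 hx.1, fun hx => ?_⟩
  have hax : a < x := (lt_rpow_one_div hr ha hs).trans hx
  exact ⟨(hiff hax).1 hx, hax⟩

lemma integrableOn_comp_rpow_one_div_iff {r a : ℝ} (hr : 0 < r) (ha : 0 ≤ a) {f : ℝ → E} :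
    IntegrableOn (fun s => f (s ^ (1 / r))) (Set.Ioi (a ^ r)) ↔
      IntegrableOn (fun x => x ^ (r - 1) • f x) (Set.Ioi a) := by
  have har : Set.Ioi (a ^ r) ∩ Set.Ioi 0 = Set.Ioi (a ^ r) :=
    Set.inter_eq_left.2 (Set.Ioi_subset_Ioi (Real.rpow_nonneg ha r))
  have ha₀ : Set.Ioi a ∩ Set.Ioi 0 = Set.Ioi a := Set.inter_eq_left.2 (Set.Ioi_subset_Ioi ha)
  rw [← har, ← integrableOn_indicator_iff measurableSet_Ioi,
    ← integrableOn_Ioi_comp_rpow_iff' _ hr.ne', ← ha₀,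
    ← integrableOn_indicator_iff measurableSet_Ioi]
  refine integrableOn_congr_fun (fun x hx => ?_) measurableSet_Ioi
  have hx₀ : 0 ≤ x := le_of_lt hx
  by_cases hxa : a < x
  · have hxr : a ^ r < x ^ r := Real.rpow_lt_rpow ha hxa hr
    simp only [Set.indicator_of_mem (Set.mem_Ioi.2 hxr), Set.indicator_of_mem (Set.mem_Ioi.2 hxa),
      one_div, Real.rpow_rpow_inv hx₀ hr.ne']
  · have hxr : ¬ a ^ r < x ^ r := not_lt.2 (Real.rpow_le_rpow hx₀ (not_lt.1 hxa) hr.le)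
    simp only [Set.indicator_of_notMem (Set.mem_Ioi.not.2 hxr),
      Set.indicator_of_notMem (Set.mem_Ioi.not.2 hxa), smul_zero]

lemma integrableOn_integral_Ioi_rpow_one_div {r a : ℝ} (hr : 0 < r) (ha : 0 ≤ a) {g : ℝ → E}
    (hg : IntegrableOn (fun x => x ^ r • g x) (Set.Ioi a)) :
    IntegrableOn (fun s : ℝ => ∫ x in Set.Ioi (s ^ (1 / r)), g x) (Set.Ioi (a ^ r)) := by
  have hgm : AEStronglyMeasurable g (volume.restrict (Set.Ioi a)) := by
    refine ((measurable_id.pow_const (-r)).aestronglyMeasurable.smul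
      hg.aestronglyMeasurable).congr ?_
    filter_upwards [ae_restrict_mem measurableSet_Ioi] with x hx
    simp [rpow_smul_rpow_smul (ha.trans_lt hx)]
  refine ((integrableOn_setIntegral_lt (measurable_id.pow_const r) hgm hg).mono_set
    (Set.Ioi_subset_Ioi (Real.rpow_nonneg ha r))).congr_fun (fun s hs => ?_) measurableSet_Ioi
  change ∫ x in {x | s < x ^ r}, g x ∂volume.restrict (Set.Ioi a) = _
  rw [Measure.restrict_restrict (measurableSet_lt measurable_const (by fun_prop)),
    setOf_lt_rpow_inter_Ioi hr ha hs]

end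

section

variable {E : Type*} [NormedAddCommGroup E] [NormedSpace ℂ E]

lemma integrable_exp_I_smul {μ : Measure ℝ} {f : ℝ → E} (hf : Integrable f μ) :
    Integrable (fun x : ℝ => exp (I * x) • f x) μ :=
  hf.bdd_smul 1 (by fun_prop : Continuous fun x : ℝ => exp (I * x)).aestronglyMeasurable
    (.of_forall fun x => by rw [mul_comm, norm_exp_ofReal_mul_I])

lemma integral_Ioi_exp_I_smul [CompleteSpace E] {a : ℝ} {G G' : ℝ → E}
    (hderiv : ∀ x ∈ Set.Ici a, HasDerivAt G (G' x) x)
    (hG : IntegrableOn G (Set.Ioi a)) (hG' : IntegrableOn G' (Set.Ioi a)) :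
    ∫ x in Set.Ioi a, exp (I * x) • G x =
      I • (exp (I * a) • G a + ∫ x in Set.Ioi a, exp (I * x) • G' x) := by
  have hexp (x : ℝ) : HasDerivAt (fun x : ℝ => exp (I * x)) (exp (I * x) * (I * 1)) x :=
    (((hasDerivAt_id x).ofReal_comp).const_mul I).cexp
  have hprod (x : ℝ) (hx : x ∈ Set.Ici a) : HasDerivAt (fun x : ℝ => exp (I * x) • G x)
      (exp (I * x) • G' x + I • exp (I * x) • G x) x :=
    ((hexp x).smul (hderiv x hx)).congr_deriv (by rw [mul_one, mul_comm _ I, mul_smul])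
  have hu := integrable_exp_I_smul hG
  have hIu : IntegrableOn (fun x : ℝ => I • exp (I * x) • G x) (Set.Ioi a) := hu.smul I
  have hu' := integrable_exp_I_smul hG'
  have hlim := tendsto_zero_of_hasDerivAt_of_integrableOn_Ioi
    (fun x hx => hprod x (Set.Ioi_subset_Ici_self hx)) (hu'.add hIu) hu
  have hftc := integral_Ioi_of_hasDerivAt_of_tendsto' hprod (hu'.add hIu) hlim
  rw [integral_add hu' hIu, integral_smul, zero_sub] at hftc
  calc ∫ x in Set.Ioi a, exp (I * x) • G x
    _ = -(I • I • ∫ x in Set.Ioi a, exp (I * x) • G x) := by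
      rw [smul_smul, I_mul_I, neg_one_smul, neg_neg]
    _ = I • (exp (I * a) • G a + ∫ x in Set.Ioi a, exp (I * x) • G' x) := by
      rw [eq_sub_of_add_eq' hftc]
      module

lemma integrableOn_integral_Ioi_exp_I_smul [CompleteSpace E] {r a : ℝ} (hr : 0 < r) (ha : 0 ≤ a)
    {G G' : ℝ → E} (hderiv : ∀ x ∈ Set.Ioi a, HasDerivAt G (G' x) x)
    (hG : IntegrableOn G (Set.Ioi a))
    (hGr : IntegrableOn (fun x => x ^ (r - 1) • G x) (Set.Ioi a))
    (hG' : IntegrableOn (fun x => x ^ r • G' x) (Set.Ioi a)) :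
    IntegrableOn (fun s : ℝ => ∫ x in Set.Ioi (s ^ (1 / r)), exp (I * x) • G x)
      (Set.Ioi (a ^ r)) := by
  have hboundary := (integrableOn_comp_rpow_one_div_iff hr ha (f := fun x => exp (I * x) • G x)).2
    (by simpa only [IntegrableOn, smul_comm (exp _)] using integrable_exp_I_smul hGr)
  have htail := integrableOn_integral_Ioi_rpow_one_div hr ha (g := fun x => exp (I * x) • G' x)
    (by simpa only [IntegrableOn, smul_comm (exp _)] using integrable_exp_I_smul hG')
  refine IntegrableOn.congr_fun ((hboundary.add htail).smul I) (fun s hs => ?_) measurableSet_Ioi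
  have hs₁ : a < s ^ (1 / r) := lt_rpow_one_div hr ha hs
  have hsub : Set.Ioi (s ^ (1 / r)) ⊆ Set.Ioi a := Set.Ioi_subset_Ioi hs₁.le
  have hG'₀ : IntegrableOn G' (Set.Ioi (s ^ (1 / r))) := by
    simpa using integrableOn_rpow_smul_mono hr.le (ha.trans_lt hs₁) (hG'.mono_set hsub)
  exact (integral_Ioi_exp_I_smul (fun x hx => hderiv x (hs₁.trans_le hx)) (hG.mono_set hsub)
    hG'₀).symm

/-- The inner integral carries the weight `x ^ (-r)` and the boundary term of its integration by
parts the weight `x⁻¹`, whence the exponent `-min r 1`. -/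
theorem stmt16_general [CompleteSpace E] {r : ℝ} (hr : 0 < r) {A A' : ℝ → E}
    (hderiv : ∀ x ∈ Set.Ioi (1 : ℝ), HasDerivAt A (A' x) x)
    (hA : IntegrableOn (fun x => x ^ (-min r 1) • A x) (Set.Ioi 1))
    (hA' : IntegrableOn A' (Set.Ioi 1)) :
    IntegrableOn
      (fun s : ℝ => ∫ x in Set.Ioi (max (s ^ (1 / r)) 1), exp (I * x) • x ^ (-r) • A x)
      (Set.Ici 1) := by
  have hAr := integrableOn_rpow_smul_mono (neg_le_neg (min_le_left r 1)) one_pos hA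
  have hA₁ := integrableOn_rpow_smul_mono (neg_le_neg (min_le_right r 1)) one_pos hA
  have hGderiv (x : ℝ) (hx : x ∈ Set.Ioi 1) : HasDerivAt (fun x => x ^ (-r) • A x)
      (x ^ (-r) • A' x + (-r * x ^ (-r - 1)) • A x) x :=
    (Real.hasDerivAt_rpow_const (.inl (zero_lt_one.trans hx).ne')).smul (hderiv x hx)
  have hGr : IntegrableOn (fun x : ℝ => x ^ (r - 1) • x ^ (-r) • A x) (Set.Ioi 1) :=
    hA₁.congr_fun (fun x hx => by
      rw [rpow_smul_rpow_smul (zero_lt_one.trans hx)]; ring_nf) measurableSet_Ioi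
  have hG' : IntegrableOn
      (fun x : ℝ => x ^ r • (x ^ (-r) • A' x + (-r * x ^ (-r - 1)) • A x)) (Set.Ioi 1) := by
    refine IntegrableOn.congr_fun (hA'.add (hA₁.smul (-r))) (fun x hx => ?_) measurableSet_Ioi
    have hx₀ : 0 < x := zero_lt_one.trans hx
    simp only [Pi.add_apply, Pi.smul_apply]
    rw [smul_add, mul_smul, smul_comm (x ^ r) (-r), rpow_smul_rpow_smul hx₀,
      rpow_smul_rpow_smul hx₀, add_neg_cancel, Real.rpow_zero, one_smul, add_sub, add_neg_cancel,
      zero_sub]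
  have hK := integrableOn_integral_Ioi_exp_I_smul hr zero_le_one hGderiv hAr hGr hG'
  rw [Real.one_rpow] at hK
  rw [integrableOn_Ici_iff_integrableOn_Ioi]
  refine hK.congr_fun (fun s hs => ?_) measurableSet_Ioi
  simp only [max_eq_left (Real.one_le_rpow (le_of_lt hs) (one_div_nonneg.2 hr.le))]

end

/-- Fix `r > 1` and let `A` be continuously differentiable on `[1,∞)`
with `∫_1^∞ |A|² < ∞` and `∫_1^∞ |A'| < ∞`. Then
`K(s) = ∫_{max(s^{1/r},1)}^∞ A(x) e^{ix} x^{-r} dx` is absolutely integrable on `[1,∞)`. -/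
theorem stmt16 (r : ℝ) (hr : 1 < r)
    (A A' : ℝ → ℂ)
    (hderiv : ∀ x ∈ Set.Ici (1 : ℝ), HasDerivAt A (A' x) x)
    (hcont : ContinuousOn A' (Set.Ici (1 : ℝ)))
    (hA2 : IntegrableOn (fun x => ‖A x‖ ^ 2) (Set.Ici (1 : ℝ)) volume)
    (hA' : IntegrableOn A' (Set.Ici (1 : ℝ)) volume) :
    IntegrableOn
      (fun s => ∫ x in Set.Ioi (max (s ^ (1 / r)) 1),
        A x * Complex.exp (Complex.I * (x : ℂ)) * ((x ^ (-r) : ℝ) : ℂ))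
      (Set.Ici (1 : ℝ)) volume := by
  have hderiv₁ (x : ℝ) (hx : x ∈ Set.Ioi 1) := hderiv x (Set.Ioi_subset_Ici_self hx)
  have hA := integrableOn_rpow_smul_of_integrableOn_sq (p := -min r 1)
    (by rw [min_eq_right hr.le]; norm_num) one_pos
    ((HasDerivAt.continuousOn hderiv₁).aestronglyMeasurable measurableSet_Ioi)
    (hA2.mono_set Set.Ioi_subset_Ici_self)
  simpa only [real_smul, smul_eq_mul, mul_comm, mul_left_comm, mul_assoc] using
    stmt16_general (zero_lt_one.trans hr) hderiv₁ hA (hA'.mono_set Set.Ioi_subset_Ici_self)
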